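/- For every ρ₀ ∈ ℝ and C₀ > 0 there exists a constant C > 0, depending only on d, T, ρ₀ and C₀, such that all admissible functions u, v satisfying, for every (x,t) ∈ Q, the pointwise inequalities |∂_t u + Δu| ≤ C₀(|u| + |∇u| + |v|) and |∂_t v − Δv − ρ₀ Δu| ≤ C₀(|u| + |v| + |∇u| + |∇v|) obey the global Lipschitz stability estimate ‖u‖_{H^{2,1}(Q)} + ‖v‖_{H^{2,1}(Q)} ≤ C ( ‖u(·,T)‖_{H¹(ℝ^d)} + ‖∇v(·,0)‖_{L²(ℝ^d)} + ‖v(·,T)‖_{L²(ℝ^d)} ). -/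

import Mathlib

open MeasureTheory Real Set

noncomputable section

/-- Spatial partial derivative of `f` in the `i`-th coordinate direction. -/
def spd {d : ℕ} (i : Fin d) (f : (Fin d → ℝ) → ℝ) (x : Fin d → ℝ) : ℝ :=
  fderiv ℝ f x (Pi.single i 1)

/-- Time derivative `∂_t u`. -/
def tder {d : ℕ} (u : (Fin d → ℝ) → ℝ → ℝ) (x : Fin d → ℝ) (t : ℝ) : ℝ :=
  deriv (u x) t

/-- Squared norm of the spatial gradient, `|∇u|²`. -/
def grad2 {d : ℕ} (u : (Fin d → ℝ) → ℝ → ℝ) (x : Fin d → ℝ) (t : ℝ) : ℝ :=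
  ∑ i : Fin d, (spd i (fun y => u y t) x) ^ 2

/-- Norm of the spatial gradient, `|∇u|`. -/
def gradNorm {d : ℕ} (u : (Fin d → ℝ) → ℝ → ℝ) (x : Fin d → ℝ) (t : ℝ) : ℝ :=
  Real.sqrt (grad2 u x t)

/-- Second spatial partial derivative `∂_i ∂_j u`. -/
def pdij {d : ℕ} (i j : Fin d) (u : (Fin d → ℝ) → ℝ → ℝ) (x : Fin d → ℝ) (t : ℝ) : ℝ :=
  spd i (fun y => spd j (fun z => u z t) y) x

/-- Spatial Laplacian `Δu`. -/
def lap {d : ℕ} (u : (Fin d → ℝ) → ℝ → ℝ) (x : Fin d → ℝ) (t : ℝ) : ℝ :=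
  ∑ i : Fin d, pdij i i u x t

/-- `Σ_{i,j=1}^d |∂_i∂_j u|²`. -/
def hess2 {d : ℕ} (u : (Fin d → ℝ) → ℝ → ℝ) (x : Fin d → ℝ) (t : ℝ) : ℝ :=
  ∑ i : Fin d, ∑ j : Fin d, (pdij i j u x t) ^ 2

/-- `u : ℝ^d × ℝ → ℝ` is admissible: `C^∞` and spatially compactly supported,
uniformly for `t ∈ [0,T]`. -/
def Admissible {d : ℕ} (T : ℝ) (u : (Fin d → ℝ) → ℝ → ℝ) : Prop :=
  ContDiff ℝ (⊤ : ℕ∞) (fun p : (Fin d → ℝ) × ℝ => u p.1 p.2) ∧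
  ∃ K₀ : Set (Fin d → ℝ), IsCompact K₀ ∧
    ∀ x t, x ∉ K₀ → t ∈ Set.Icc (0 : ℝ) T → u x t = 0

end


/-- Smooth as a function of `(x,t)`. -/
def Sm {d : ℕ} (u : (Fin d → ℝ) → ℝ → ℝ) : Prop :=
  ContDiff ℝ (⊤ : ℕ∞) (fun p : (Fin d → ℝ) × ℝ => u p.1 p.2)

lemma Sm.slice {d : ℕ} {u : (Fin d → ℝ) → ℝ → ℝ} (hu : Sm u) (t : ℝ) :
    ContDiff ℝ (⊤ : ℕ∞) (fun y => u y t) := by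
  have : (fun y => u y t) = (fun p : (Fin d → ℝ) × ℝ => u p.1 p.2) ∘ (fun y => (y, t)) := rfl
  rw [this]
  exact hu.comp (contDiff_id.prodMk contDiff_const)

lemma Sm.tslice {d : ℕ} {u : (Fin d → ℝ) → ℝ → ℝ} (hu : Sm u) (x : Fin d → ℝ) :
    ContDiff ℝ (⊤ : ℕ∞) (u x) := by
  have : (u x) = (fun p : (Fin d → ℝ) × ℝ => u p.1 p.2) ∘ (fun t => (x, t)) := rfl
  rw [this]
  exact hu.comp (contDiff_const.prodMk contDiff_id)

lemma Sm.spd_eq {d : ℕ} {u : (Fin d → ℝ) → ℝ → ℝ} (hu : Sm u) (i : Fin d)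
    (x : Fin d → ℝ) (t : ℝ) :
    spd i (fun y => u y t) x =
      fderiv ℝ (fun p : (Fin d → ℝ) × ℝ => u p.1 p.2) (x, t) (Pi.single i 1, 0) := by
  have h1 : HasFDerivAt (fun p : (Fin d → ℝ) × ℝ => u p.1 p.2)
      (fderiv ℝ (fun p : (Fin d → ℝ) × ℝ => u p.1 p.2) (x, t)) (x, t) :=
    (hu.differentiable (by simp) (x, t)).hasFDerivAt
  have h2 : HasFDerivAt (fun y : Fin d → ℝ => (y, t)) (ContinuousLinearMap.inl ℝ _ ℝ) x :=
    hasFDerivAt_prodMk_left x t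
  have h3 := h1.comp x h2
  unfold spd
  have h4 : fderiv ℝ (fun y => u y t) x = _ := h3.fderiv
  rw [h4]; simp

lemma Sm.tder_eq {d : ℕ} {u : (Fin d → ℝ) → ℝ → ℝ} (hu : Sm u)
    (x : Fin d → ℝ) (t : ℝ) :
    tder u x t =
      fderiv ℝ (fun p : (Fin d → ℝ) × ℝ => u p.1 p.2) (x, t) (0, 1) := by
  have h1 : HasFDerivAt (fun p : (Fin d → ℝ) × ℝ => u p.1 p.2)
      (fderiv ℝ (fun p : (Fin d → ℝ) × ℝ => u p.1 p.2) (x, t)) (x, t) :=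
    (hu.differentiable (by simp) (x, t)).hasFDerivAt
  have h2 : HasFDerivAt (fun s : ℝ => (x, s)) (ContinuousLinearMap.inr ℝ (Fin d → ℝ) ℝ) t :=
    hasFDerivAt_prodMk_right x t
  have h3 := h1.comp t h2
  have h4 := h3.hasDerivAt
  unfold tder
  have h5 : deriv (u x) t = _ := h4.deriv
  rw [h5]; simp

lemma smooth_fderiv_apply {E : Type*} [NormedAddCommGroup E] [NormedSpace ℝ E] {f : E → ℝ}
    (hf : ContDiff ℝ (⊤ : ℕ∞) f) (v : E) : ContDiff ℝ (⊤ : ℕ∞) (fun p => fderiv ℝ f p v) :=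
  (hf.fderiv_right (m := (⊤ : ℕ∞)) (by simp)).clm_apply contDiff_const

lemma smooth_fderiv_comm {E : Type*} [NormedAddCommGroup E] [NormedSpace ℝ E] {f : E → ℝ}
    (hf : ContDiff ℝ (⊤ : ℕ∞) f) (v w : E) (p : E) :
    fderiv ℝ (fun q => fderiv ℝ f q v) p w = fderiv ℝ (fun q => fderiv ℝ f q w) p v := by
  have hd : DifferentiableAt ℝ (fderiv ℝ f) p :=
    (hf.fderiv_right (m := (⊤ : ℕ∞)) (by simp)).differentiable (by simp) p
  have key : ∀ a b : E, fderiv ℝ (fun q => fderiv ℝ f q a) p b = fderiv ℝ (fderiv ℝ f) p b a := by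
    intro a b
    rw [fderiv_clm_apply hd (differentiableAt_const a)]
    simp
  rw [key, key]
  have := (hf.contDiffAt (x := p)).isSymmSndFDerivAt (by
    rw [minSmoothness_of_isRCLikeNormedField]; exact WithTop.coe_le_coe.2 (le_top : (2 : ℕ∞) ≤ ⊤))
  exact this w v

lemma Sm.spd {d : ℕ} {u : (Fin d → ℝ) → ℝ → ℝ} (hu : Sm u) (i : Fin d) :
    Sm (fun x t => spd i (fun y => u y t) x) := by
  unfold Sm
  simp only [hu.spd_eq]
  exact smooth_fderiv_apply hu _

lemma Sm.tder {d : ℕ} {u : (Fin d → ℝ) → ℝ → ℝ} (hu : Sm u) : Sm (tder u) := by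
  unfold Sm
  simp only [hu.tder_eq]
  exact smooth_fderiv_apply hu _

lemma Sm.comm {d : ℕ} {u : (Fin d → ℝ) → ℝ → ℝ} (hu : Sm u) (i : Fin d) (x : Fin d → ℝ) (t : ℝ) :
    _root_.tder (fun x t => _root_.spd i (fun y => u y t) x) x t
      = _root_.spd i (fun y => _root_.tder u y t) x := by
  rw [(hu.spd i).tder_eq, hu.tder.spd_eq]
  simp only [hu.spd_eq, hu.tder_eq]
  exact smooth_fderiv_comm hu _ _ _

lemma Sm.hasDerivAt {d : ℕ} {u : (Fin d → ℝ) → ℝ → ℝ} (hu : Sm u) (x : Fin d → ℝ) (t : ℝ) :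
    HasDerivAt (u x) (_root_.tder u x t) t :=
  ((hu.tslice x).differentiable (by simp) t).hasDerivAt

lemma Sm.grad2 {d : ℕ} {u : (Fin d → ℝ) → ℝ → ℝ} (hu : Sm u) : Sm (grad2 u) := by
  unfold Sm _root_.grad2
  exact ContDiff.sum fun i _ => (hu.spd i).pow 2

lemma Sm.sq {d : ℕ} {u : (Fin d → ℝ) → ℝ → ℝ} (hu : Sm u) : Sm (fun x t => u x t ^ 2) :=
  ContDiff.pow hu 2

lemma tder_sq {d : ℕ} {u : (Fin d → ℝ) → ℝ → ℝ} (hu : Sm u) (x : Fin d → ℝ) (t : ℝ) :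
    tder (fun x t => u x t ^ 2) x t = 2 * (u x t * tder u x t) := by
  have := ((hu.hasDerivAt x t).pow 2).deriv
  unfold tder at *
  have h : deriv (fun t => u x t ^ 2) t = _ := this
  rw [h]; simp; ring

lemma tder_grad2 {d : ℕ} {u : (Fin d → ℝ) → ℝ → ℝ} (hu : Sm u) (x : Fin d → ℝ) (t : ℝ) :
    tder (grad2 u) x t =
      2 * ∑ i, spd i (fun y => u y t) x * spd i (fun y => tder u y t) x := by
  have h : HasDerivAt (grad2 u x) (∑ i, 2 * (spd i (fun y => u y t) x *
      spd i (fun y => tder u y t) x)) t := by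
    unfold grad2
    refine HasDerivAt.fun_sum fun i _ => ?_
    have := ((hu.spd i).hasDerivAt x t).pow 2
    rw [hu.comm] at this
    convert! this using 1
    simp; ring
  rw [tder, h.deriv, Finset.mul_sum]

/-- Integration by parts in one coordinate direction. -/
lemma ibp {d : ℕ} (i : Fin d) {f g : (Fin d → ℝ) → ℝ} (hf : ContDiff ℝ (⊤ : ℕ∞) f)
    (hg : ContDiff ℝ (⊤ : ℕ∞) g) (hfc : HasCompactSupport f) :
    ∫ x, f x * spd i g x = - ∫ x, spd i f x * g x := by
  have cf := (smooth_fderiv_apply hf (Pi.single i 1)).continuous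
  have cg := (smooth_fderiv_apply hg (Pi.single i 1)).continuous
  have hf' : HasCompactSupport (fun x => fderiv ℝ f x (Pi.single i 1)) := hfc.fderiv_apply ℝ _
  unfold spd
  apply integral_mul_fderiv_eq_neg_fderiv_mul_of_integrable
  · exact (cf.mul hg.continuous).integrable_of_hasCompactSupport hf'.mul_right
  · exact (hf.continuous.mul cg).integrable_of_hasCompactSupport hfc.mul_right
  · exact (hf.continuous.mul hg.continuous).integrable_of_hasCompactSupport hfc.mul_right
  · exact fun x _ => hf.differentiable (by simp) x
  · exact fun x _ => hg.differentiable (by simp) x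

lemma spd_smooth {d : ℕ} (i : Fin d) {f : (Fin d → ℝ) → ℝ} (hf : ContDiff ℝ (⊤ : ℕ∞) f) :
    ContDiff ℝ (⊤ : ℕ∞) (spd i f) := smooth_fderiv_apply hf _

lemma spd_cpt {d : ℕ} (i : Fin d) {f : (Fin d → ℝ) → ℝ} (hf : HasCompactSupport f) :
    HasCompactSupport (spd i f) := hf.fderiv_apply ℝ _

lemma spd_comm {d : ℕ} (i j : Fin d) {f : (Fin d → ℝ) → ℝ} (hf : ContDiff ℝ (⊤ : ℕ∞) f) :
    spd i (spd j f) = spd j (spd i f) := funext fun x => smooth_fderiv_comm hf _ _ x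

lemma green {d : ℕ} {f g : (Fin d → ℝ) → ℝ} (hf : ContDiff ℝ (⊤ : ℕ∞) f)
    (hg : ContDiff ℝ (⊤ : ℕ∞) g) (hfc : HasCompactSupport f) :
    ∫ x, ∑ i, spd i f x * spd i g x = - ∫ x, (∑ i, spd i (spd i f) x) * g x := by
  simp only [Finset.sum_mul]
  rw [integral_finsetSum, integral_finsetSum, ← Finset.sum_neg_distrib]
  · exact Finset.sum_congr rfl fun i _ => ibp i (spd_smooth i hf) hg (spd_cpt i hfc)
  · exact fun i _ => ((spd_smooth i (spd_smooth i hf)).continuous.mul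
      hg.continuous).integrable_of_hasCompactSupport (spd_cpt i (spd_cpt i hfc)).mul_right
  · exact fun i _ => ((spd_smooth i hf).continuous.mul
      (spd_smooth i hg).continuous).integrable_of_hasCompactSupport (spd_cpt i hfc).mul_right

/-- `∫ |D²f|² = ∫ (Δf)²` for smooth compactly supported `f`. -/
lemma hess_lap {d : ℕ} {f : (Fin d → ℝ) → ℝ} (hf : ContDiff ℝ (⊤ : ℕ∞) f)
    (hfc : HasCompactSupport f) :
    ∫ x, ∑ i, ∑ j, (spd i (spd j f) x) ^ 2 = ∫ x, (∑ i, spd i (spd i f) x) ^ 2 := by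
  have hInt4 : ∀ i j k l, Integrable (fun x => spd i (spd j f) x * spd k (spd l f) x) :=
    fun i j k l => ((spd_smooth i (spd_smooth j hf)).continuous.mul
      (spd_smooth k (spd_smooth l hf)).continuous).integrable_of_hasCompactSupport
        (spd_cpt i (spd_cpt j hfc)).mul_right
  have key : ∀ i j, ∫ x, spd i (spd j f) x * spd i (spd j f) x
      = ∫ x, spd i (spd i f) x * spd j (spd j f) x := by
    intro i j
    rw [ibp i (spd_smooth i (spd_smooth j hf)) (spd_smooth j hf) (spd_cpt i (spd_cpt j hfc))]
    rw [spd_comm i j hf, spd_comm i j (spd_smooth i hf),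
      ibp j (spd_smooth i (spd_smooth i hf)) (spd_smooth j hf) (spd_cpt i (spd_cpt i hfc))]
  simp only [sq, Finset.sum_mul_sum]
  rw [integral_finsetSum _ fun i _ => integrable_finsetSum _ fun j _ => hInt4 i j i j,
    integral_finsetSum _ fun i _ => integrable_finsetSum _ fun j _ => hInt4 i i j j]
  refine Finset.sum_congr rfl fun i _ => ?_
  rw [integral_finsetSum _ fun j _ => hInt4 i j i j, integral_finsetSum _ fun j _ => hInt4 i i j j]
  exact Finset.sum_congr rfl fun j _ => key i j

/-- Vanishing off `K` for `t ∈ [0,T]`. -/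
def Van {d : ℕ} (T : ℝ) (K : Set (Fin d → ℝ)) (u : (Fin d → ℝ) → ℝ → ℝ) : Prop :=
  ∀ x t, x ∉ K → t ∈ Set.Icc (0 : ℝ) T → u x t = 0

lemma Van.cpt {d : ℕ} {T : ℝ} {K : Set (Fin d → ℝ)} {u : (Fin d → ℝ) → ℝ → ℝ} (h : Van T K u)
    (hK : IsCompact K) {t : ℝ} (ht : t ∈ Set.Icc (0 : ℝ) T) :
    HasCompactSupport (fun y => u y t) :=
  HasCompactSupport.intro hK fun x hx => h x t hx ht

lemma Van.spd {d : ℕ} {T : ℝ} {K : Set (Fin d → ℝ)} {u : (Fin d → ℝ) → ℝ → ℝ} (h : Van T K u)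
    (hK : IsCompact K) (i : Fin d) : Van T K (fun x t => spd i (fun y => u y t) x) := by
  intro x t hx ht
  have : (fun y => u y t) =ᶠ[nhds x] fun _ => 0 := by
    filter_upwards [hK.isClosed.isOpen_compl.mem_nhds hx] with y hy
    exact h y t hy ht
  simp only [_root_.spd]
  rw [this.fderiv_eq]; simp

lemma Van.grad2 {d : ℕ} {T : ℝ} {K : Set (Fin d → ℝ)} {u : (Fin d → ℝ) → ℝ → ℝ} (h : Van T K u)
    (hK : IsCompact K) : Van T K (grad2 u) := by
  intro x t hx ht
  unfold _root_.grad2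
  exact Finset.sum_eq_zero fun i _ => by
    have := h.spd hK i x t hx ht
    simp only at this
    rw [this]; simp

lemma Van.sq {d : ℕ} {T : ℝ} {K : Set (Fin d → ℝ)} {u : (Fin d → ℝ) → ℝ → ℝ} (h : Van T K u) :
    Van T K (fun x t => u x t ^ 2) := by
  intro x t hx ht
  simp only [h x t hx ht]; simp

lemma Van.tder {d : ℕ} {T : ℝ} {K : Set (Fin d → ℝ)} {u : (Fin d → ℝ) → ℝ → ℝ} (h : Van T K u)
    {x : Fin d → ℝ} {t : ℝ} (hx : x ∉ K) (ht : t ∈ Set.Ioo (0 : ℝ) T) : tder u x t = 0 := by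
  have : u x =ᶠ[nhds t] fun _ => 0 := by
    filter_upwards [isOpen_Ioo.mem_nhds ht] with s hs
    exact h x s hx ⟨hs.1.le, hs.2.le⟩
  rw [_root_.tder, this.deriv_eq]; simp

lemma Van.contOn {d : ℕ} {T : ℝ} {K : Set (Fin d → ℝ)} {u : (Fin d → ℝ) → ℝ → ℝ} (h : Van T K u)
    (hK : IsCompact K) (hu : Sm u) :
    ContinuousOn (fun t => ∫ x, u x t) (Set.Icc 0 T) := by
  refine continuousOn_integral_of_compact_support (f := fun t x => u x t) hK ?_ ?_
  · exact (hu.continuous.comp continuous_swap).continuousOn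
  · exact fun t x ht hx => h x t hx ht

lemma Van.deriv_int {d : ℕ} {T : ℝ} {K : Set (Fin d → ℝ)} {u : (Fin d → ℝ) → ℝ → ℝ}
    (h : Van T K u) (hK : IsCompact K) (hu : Sm u) {t : ℝ} (ht : t ∈ Set.Ioo (0 : ℝ) T) :
    HasDerivAt (fun t => ∫ x, u x t) (∫ x, _root_.tder u x t) t := by
  have hIcc : ∀ s ∈ Set.Ioo (0 : ℝ) T, s ∈ Set.Icc (0 : ℝ) T := fun s hs => ⟨hs.1.le, hs.2.le⟩
  obtain ⟨M, hM⟩ := (hK.prod (isCompact_Icc (a := (0 : ℝ)) (b := T))).exists_bound_of_continuousOn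
    (f := fun p : (Fin d → ℝ) × ℝ => _root_.tder u p.1 p.2) hu.tder.continuous.continuousOn
  have hmeas : ∀ s, AEStronglyMeasurable (fun x => u x s) (volume : Measure (Fin d → ℝ)) :=
    fun s => (hu.slice s).continuous.aestronglyMeasurable
  refine (hasDerivAt_integral_of_dominated_loc_of_deriv_le (F := fun t x => u x t)
    (F' := fun t x => _root_.tder u x t) (bound := K.indicator fun _ => M)
    (isOpen_Ioo.mem_nhds ht) (Filter.Eventually.of_forall hmeas) ?_ ?_ ?_ ?_ ?_).2
  · exact (hu.slice t).continuous.integrable_of_hasCompactSupport (h.cpt hK (hIcc t ht))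
  · exact (hu.tder.slice t).continuous.aestronglyMeasurable
  · refine Filter.Eventually.of_forall fun x s hs => ?_
    by_cases hx : x ∈ K
    · rw [Set.indicator_of_mem hx]; exact hM (x, s) ⟨hx, hIcc s hs⟩
    · rw [Set.indicator_of_notMem hx, h.tder hx hs]; simp
  · exact (integrable_indicator_iff hK.measurableSet).2 (integrableOn_const hK.measure_ne_top)
  · exact Filter.Eventually.of_forall fun x s _ => hu.hasDerivAt x s

lemma aux_sub_sq (x y : ℝ) : (x - y) ^ 2 ≤ 2 * x ^ 2 + 2 * y ^ 2 := by
  nlinarith [sq_nonneg (x + y)]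

lemma aux_add3_sq (x y z : ℝ) : (x + y + z) ^ 2 ≤ 4 * x ^ 2 + 4 * y ^ 2 + 2 * z ^ 2 := by
  nlinarith [sq_nonneg (x + y - z), sq_nonneg (x - y)]

set_option maxHeartbeats 2000000 in
/-- Pointwise absorption inequality behind the Carleman-type estimate. -/
lemma carleman_pointwise (ρ C0 κ M lam a aM u v p q U V ut vt : ℝ)
    (hC0 : 0 < C0) (hκ : κ = 2 * ρ ^ 2 + 1) (hM : M = 8 * C0 ^ 2 + 6 * κ * C0 ^ 2)
    (hlam : lam = 8 * M + 8) (ha : lam ≤ a) (haM : a ≤ aM) (hp : 0 ≤ p) (hq : 0 ≤ q)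
    (h1 : |ut + U| ≤ C0 * (|u| + p + |v|))
    (h2 : |vt - V - ρ * U| ≤ C0 * (|u| + |v| + p + q)) :
    u ^ 2 + p ^ 2 + U ^ 2 + ut ^ 2 ≤
      (4 + 6 * C0 ^ 2 + 4 * ρ ^ 2 + 16 * C0 ^ 2 + 3 * (4 + 2 * aM ^ 2)) *
      (κ * (2 * a * p ^ 2 + 2 * a ^ 2 * u ^ 2 - 2 * (U * ut) + lam * a * u ^ 2 + 2 * a * (u * ut))
        + (2 * a ^ 2 * v ^ 2 - 2 * a * q ^ 2 + lam * a * v ^ 2 + 2 * a * (v * vt) + 2 * (V * vt))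
        + 2 * a * κ * (p ^ 2 + u * U) + (2 * a + lam / 8) * (q ^ 2 + v * V)) ∧
    v ^ 2 + q ^ 2 + V ^ 2 + vt ^ 2 ≤
      (4 + 6 * C0 ^ 2 + 4 * ρ ^ 2 + 16 * C0 ^ 2 + 3 * (4 + 2 * aM ^ 2)) *
      (κ * (2 * a * p ^ 2 + 2 * a ^ 2 * u ^ 2 - 2 * (U * ut) + lam * a * u ^ 2 + 2 * a * (u * ut))
        + (2 * a ^ 2 * v ^ 2 - 2 * a * q ^ 2 + lam * a * v ^ 2 + 2 * a * (v * vt) + 2 * (V * vt))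
        + 2 * a * κ * (p ^ 2 + u * U) + (2 * a + lam / 8) * (q ^ 2 + v * V)) := by
  have hM0 : 0 ≤ M := by rw [hM, hκ]; positivity
  have hκ1 : 1 ≤ κ := by rw [hκ]; nlinarith [sq_nonneg ρ]
  have hlam8 : 8 ≤ lam := by linarith
  have ha8 : 8 ≤ a := by linarith
  set F := ut + U with hF
  set G := vt - V - ρ * U with hG
  set Z := V + a * v with hZ
  have hut : ut = F - U := by rw [hF]; ring
  have hvt : vt = G + ρ * U + V := by rw [hG]; ring
  have hV : V = Z - a * v := by rw [hZ]; ring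
  have hF2 : F ^ 2 ≤ 3 * C0 ^ 2 * (u ^ 2 + p ^ 2 + v ^ 2) := by
    have : F ^ 2 ≤ (C0 * (|u| + p + |v|)) ^ 2 := by
      rw [← sq_abs F]; exact pow_le_pow_left₀ (abs_nonneg _) h1 2
    have h3 : (|u| + p + |v|) ^ 2 ≤ 3 * (u ^ 2 + p ^ 2 + v ^ 2) := by
      rw [← sq_abs u, ← sq_abs v]
      nlinarith [sq_nonneg (|u| - p), sq_nonneg (|u| - |v|), sq_nonneg (p - |v|)]
    calc _ ≤ _ := this
      _ = C0 ^ 2 * (|u| + p + |v|) ^ 2 := by ring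
      _ ≤ C0 ^ 2 * (3 * (u ^ 2 + p ^ 2 + v ^ 2)) := by gcongr
      _ = _ := by ring
  have hG2 : G ^ 2 ≤ 4 * C0 ^ 2 * (u ^ 2 + v ^ 2 + p ^ 2 + q ^ 2) := by
    have : G ^ 2 ≤ (C0 * (|u| + |v| + p + q)) ^ 2 := by
      rw [← sq_abs G]; exact pow_le_pow_left₀ (abs_nonneg _) h2 2
    have h3 : (|u| + |v| + p + q) ^ 2 ≤ 4 * (u ^ 2 + v ^ 2 + p ^ 2 + q ^ 2) := by
      rw [← sq_abs u, ← sq_abs v]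
      nlinarith [sq_nonneg (|u| - p), sq_nonneg (|u| - |v|), sq_nonneg (p - |v|),
        sq_nonneg (|u| - q), sq_nonneg (|v| - q), sq_nonneg (p - q)]
    calc _ ≤ _ := this
      _ = C0 ^ 2 * (|u| + |v| + p + q) ^ 2 := by ring
      _ ≤ C0 ^ 2 * (4 * (u ^ 2 + v ^ 2 + p ^ 2 + q ^ 2)) := by gcongr
      _ = _ := by ring
  clear_value F G Z
  -- the combined expression
  set R := κ * (2 * a * p ^ 2 + 2 * a ^ 2 * u ^ 2 - 2 * (U * ut) + lam * a * u ^ 2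
          + 2 * a * (u * ut))
        + (2 * a ^ 2 * v ^ 2 - 2 * a * q ^ 2 + lam * a * v ^ 2 + 2 * a * (v * vt) + 2 * (V * vt))
        + 2 * a * κ * (p ^ 2 + u * U) + (2 * a + lam / 8) * (q ^ 2 + v * V) with hR
  have hRe : R = κ * (4 * a * p ^ 2 + 2 * a ^ 2 * u ^ 2 + 2 * U ^ 2 + 2 * (a * u - U) * F
        + lam * a * u ^ 2)
      + (2 * Z ^ 2 + lam * a * v ^ 2 + 2 * Z * (G + ρ * U) + lam / 8 * q ^ 2
        + lam / 8 * v * Z - lam / 8 * a * v ^ 2) := by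
    rw [hR, hut, hvt, hV]; ring
  have e1 : 2 * (a * u - U) * F ≥ - (a ^ 2 * u ^ 2) - U ^ 2 - 2 * F ^ 2 := by
    nlinarith [sq_nonneg (a * u + F), sq_nonneg (U - F)]
  have e2 : 2 * Z * (G + ρ * U) ≥ - Z ^ 2 - 2 * G ^ 2 - 2 * ρ ^ 2 * U ^ 2 := by
    nlinarith [sq_nonneg (Z + (G + ρ * U)), sq_nonneg (G - ρ * U)]
  have e3 : lam / 8 * v * Z ≥ - Z ^ 2 / 2 - lam ^ 2 / 128 * v ^ 2 := by
    nlinarith [sq_nonneg (Z + lam / 8 * v)]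
  have e4 : lam ^ 2 * v ^ 2 ≤ lam * a * v ^ 2 := by
    have : lam ^ 2 ≤ lam * a := by rw [sq]; gcongr
    gcongr
  have hR1 : R ≥ κ * (4 * a * p ^ 2 + a ^ 2 * u ^ 2 + U ^ 2 + lam * a * u ^ 2 - 2 * F ^ 2)
      + (Z ^ 2 / 2 + 3 / 4 * (lam * a * v ^ 2) + lam / 8 * q ^ 2 - 2 * G ^ 2
        - 2 * ρ ^ 2 * U ^ 2) := by
    have k1 : κ * (2 * (a * u - U) * F) ≥ κ * (- (a ^ 2 * u ^ 2) - U ^ 2 - 2 * F ^ 2) := by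
      gcongr
    have e5 : 0 ≤ lam * a * v ^ 2 := by positivity
    rw [hRe]; linarith
  have c1 : κ * (4 * a * p ^ 2) ≥ (M + 1) * p ^ 2 := by
    have h0 : 1 * (4 * a) ≤ κ * (4 * a) := by gcongr
    have : M + 1 ≤ κ * (4 * a) := by linarith
    calc (M + 1) * p ^ 2 ≤ κ * (4 * a) * p ^ 2 := by gcongr
      _ = _ := by ring
  have c2 : κ * (a ^ 2 * u ^ 2) ≥ (M + 1) * u ^ 2 := by
    have h0 : 1 * a ≤ a * a := by gcongr; linarith
    have h1 : 1 * a ^ 2 ≤ κ * a ^ 2 := by gcongr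
    have : M + 1 ≤ κ * a ^ 2 := by linarith
    calc (M + 1) * u ^ 2 ≤ κ * a ^ 2 * u ^ 2 := by gcongr
      _ = _ := by ring
  have c3 : 3 / 4 * (lam * a * v ^ 2) ≥ (M + 1) * v ^ 2 := by
    have h0 : 8 * a ≤ lam * a := by gcongr
    have : M + 1 ≤ 3 / 4 * (lam * a) := by linarith
    calc (M + 1) * v ^ 2 ≤ 3 / 4 * (lam * a) * v ^ 2 := by gcongr
      _ = _ := by ring
  have c4 : lam / 8 * q ^ 2 = (M + 1) * q ^ 2 := by rw [hlam]; ring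
  have c5 : 0 ≤ κ * (lam * a * u ^ 2) := by positivity
  have c6 : κ * F ^ 2 ≤ κ * (3 * C0 ^ 2 * (u ^ 2 + p ^ 2 + v ^ 2)) := by gcongr
  have c7 : 0 ≤ κ * C0 ^ 2 * q ^ 2 := by positivity
  have hS : u ^ 2 + p ^ 2 + U ^ 2 + v ^ 2 + q ^ 2 + Z ^ 2 / 2 ≤ R := by
    have c8 : κ * U ^ 2 = 2 * ρ ^ 2 * U ^ 2 + U ^ 2 := by rw [hκ]; ring
    have c9 : M * (u ^ 2 + p ^ 2 + v ^ 2 + q ^ 2)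
      = 8 * C0 ^ 2 * (u ^ 2 + v ^ 2 + p ^ 2 + q ^ 2)
        + 2 * (κ * (3 * C0 ^ 2 * (u ^ 2 + p ^ 2 + v ^ 2))) + 6 * (κ * C0 ^ 2 * q ^ 2) := by
      rw [hM]; ring
    linarith
  set S := u ^ 2 + p ^ 2 + U ^ 2 + v ^ 2 + q ^ 2 + Z ^ 2 / 2 with hSd
  have s1 := sq_nonneg u
  have s2 := sq_nonneg v
  have s3 := sq_nonneg p
  have s4 := sq_nonneg q
  have s5 := sq_nonneg U
  have s6 := sq_nonneg Z
  have hS0 : 0 ≤ S := by rw [hSd]; positivity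
  have ha2 : a ^ 2 ≤ aM ^ 2 := by gcongr
  have hV2 : V ^ 2 ≤ (4 + 2 * aM ^ 2) * S := by
    have : V ^ 2 ≤ 2 * Z ^ 2 + 2 * aM ^ 2 * v ^ 2 := by
      have : a ^ 2 * v ^ 2 ≤ aM ^ 2 * v ^ 2 := by gcongr
      have h6 := aux_sub_sq Z (a * v)
      rw [← hV] at h6
      have h7 : (a * v) ^ 2 = a ^ 2 * v ^ 2 := by ring
      linarith
    have h4 : Z ^ 2 / 2 ≤ S := by linarith
    have h5 : aM ^ 2 * v ^ 2 ≤ aM ^ 2 * S := by gcongr; linarith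
    linarith
  have hF3 : F ^ 2 ≤ 3 * C0 ^ 2 * S := hF2.trans (by gcongr; linarith)
  have hG3 : G ^ 2 ≤ 4 * C0 ^ 2 * S := hG2.trans (by gcongr; linarith)
  have hU3 : ρ ^ 2 * U ^ 2 ≤ ρ ^ 2 * S := by gcongr; linarith
  have p1 : 0 ≤ C0 ^ 2 * S := by positivity
  have p2 : 0 ≤ ρ ^ 2 * S := by positivity
  have p3 : 0 ≤ aM ^ 2 * S := by positivity
  have hCS : (4 + 6 * C0 ^ 2 + 4 * ρ ^ 2 + 16 * C0 ^ 2 + 3 * (4 + 2 * aM ^ 2)) * S ≤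
      (4 + 6 * C0 ^ 2 + 4 * ρ ^ 2 + 16 * C0 ^ 2 + 3 * (4 + 2 * aM ^ 2)) * R := by gcongr
  constructor
  · refine le_trans ?_ hCS
    have : ut ^ 2 ≤ 2 * F ^ 2 + 2 * U ^ 2 := by
      rw [hut]; exact aux_sub_sq F U
    have : u ^ 2 + p ^ 2 + U ^ 2 + 2 * U ^ 2 ≤ 3 * S := by linarith
    linarith
  · refine le_trans ?_ hCS
    have : vt ^ 2 ≤ 4 * G ^ 2 + 4 * (ρ ^ 2 * U ^ 2) + 2 * V ^ 2 := by
      have h6 := aux_add3_sq G (ρ * U) V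
      rw [← hvt] at h6
      have h7 : (ρ * U) ^ 2 = ρ ^ 2 * U ^ 2 := by ring
      linarith
    have : v ^ 2 + q ^ 2 ≤ 4 * S := by linarith
    linarith

lemma integral_lin5 {α : Type*} [MeasurableSpace α] {μ : Measure α} {f1 f2 f3 f4 f5 : α → ℝ}
    (h1 : Integrable f1 μ) (h2 : Integrable f2 μ) (h3 : Integrable f3 μ) (h4 : Integrable f4 μ)
    (h5 : Integrable f5 μ) (c1 c2 c3 c4 c5 : ℝ) :
    Integrable (fun x => c1 * f1 x + c2 * f2 x + c3 * f3 x + c4 * f4 x + c5 * f5 x) μ ∧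
    ∫ x, (c1 * f1 x + c2 * f2 x + c3 * f3 x + c4 * f4 x + c5 * f5 x) ∂μ =
      c1 * ∫ x, f1 x ∂μ + c2 * ∫ x, f2 x ∂μ + c3 * ∫ x, f3 x ∂μ + c4 * ∫ x, f4 x ∂μ
        + c5 * ∫ x, f5 x ∂μ := by
  have k1 := h1.const_mul c1
  have k2 := h2.const_mul c2
  have k3 := h3.const_mul c3
  have k4 := h4.const_mul c4
  have k5 := h5.const_mul c5
  refine ⟨(((k1.fun_add k2).fun_add k3).fun_add k4).fun_add k5, ?_⟩
  rw [integral_add (((k1.fun_add k2).fun_add k3).fun_add k4) k5,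
    integral_add ((k1.fun_add k2).fun_add k3) k4,
    integral_add (k1.fun_add k2) k3, integral_add k1 k2]
  simp only [integral_const_mul]

lemma grad2_nonneg {d : ℕ} (u : (Fin d → ℝ) → ℝ → ℝ) (x : Fin d → ℝ) (t : ℝ) :
    0 ≤ grad2 u x t := Finset.sum_nonneg fun _ _ => sq_nonneg _

lemma hess2_nonneg {d : ℕ} (u : (Fin d → ℝ) → ℝ → ℝ) (x : Fin d → ℝ) (t : ℝ) :
    0 ≤ hess2 u x t := Finset.sum_nonneg fun _ _ => Finset.sum_nonneg fun _ _ => sq_nonneg _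

lemma gradNorm_sq {d : ℕ} (u : (Fin d → ℝ) → ℝ → ℝ) (x : Fin d → ℝ) (t : ℝ) :
    gradNorm u x t ^ 2 = grad2 u x t := Real.sq_sqrt (grad2_nonneg u x t)

/-- All facts about one function at a fixed time which are needed. -/
lemma slice_facts {d : ℕ} {T : ℝ} {K : Set (Fin d → ℝ)} {u : (Fin d → ℝ) → ℝ → ℝ}
    (h : Van T K u) (hK : IsCompact K) (hu : Sm u) {t : ℝ} (ht : t ∈ Set.Ioo (0 : ℝ) T) :
    Integrable (fun x => u x t ^ 2) ∧ Integrable (fun x => grad2 u x t) ∧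
    Integrable (fun x => hess2 u x t) ∧ Integrable (fun x => tder u x t ^ 2) ∧
    Integrable (fun x => lap u x t ^ 2) ∧ Integrable (fun x => u x t * lap u x t) ∧
    Integrable (fun x => u x t * tder u x t) ∧ Integrable (fun x => lap u x t * tder u x t) ∧
    ∫ x, tder (fun x t => u x t ^ 2) x t = 2 * ∫ x, u x t * tder u x t ∧
    ∫ x, tder (grad2 u) x t = - (2 * ∫ x, lap u x t * tder u x t) ∧
    ∫ x, u x t * lap u x t = - ∫ x, grad2 u x t ∧
    ∫ x, hess2 u x t = ∫ x, lap u x t ^ 2 := by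
  have ht' : t ∈ Set.Icc (0 : ℝ) T := ⟨ht.1.le, ht.2.le⟩
  have sf := hu.slice t
  have cf := h.cpt hK ht'
  have st := hu.tder.slice t
  have ct : HasCompactSupport (fun y => tder u y t) :=
    HasCompactSupport.intro hK fun x hx => h.tder hx ht
  have sl : Continuous (fun x => lap u x t) :=
    continuous_finsetSum _ fun i _ => (spd_smooth i (spd_smooth i sf)).continuous
  have cl : HasCompactSupport (fun x => lap u x t) := by
    refine HasCompactSupport.intro hK fun x hx => ?_
    exact Finset.sum_eq_zero fun i _ => (h.spd hK i).spd hK i x t hx ht'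
  have sh : Continuous (fun x => hess2 u x t) :=
    continuous_finsetSum _ fun i _ => continuous_finsetSum _ fun j _ =>
      (spd_smooth i (spd_smooth j sf)).continuous.pow 2
  have ch : HasCompactSupport (fun x => hess2 u x t) := by
    refine HasCompactSupport.intro hK fun x hx => ?_
    refine Finset.sum_eq_zero fun i _ => Finset.sum_eq_zero fun j _ => ?_
    have : pdij i j u x t = 0 := (h.spd hK j).spd hK i x t hx ht'
    rw [this]; simp
  refine ⟨?_, ?_, ?_, ?_, ?_, ?_, ?_, ?_, ?_, ?_, ?_, ?_⟩
  · exact (hu.sq.slice t).continuous.integrable_of_hasCompactSupport (h.sq.cpt hK ht')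
  · exact (hu.grad2.slice t).continuous.integrable_of_hasCompactSupport ((h.grad2 hK).cpt hK ht')
  · exact sh.integrable_of_hasCompactSupport ch
  · simp only [sq]
    exact (st.continuous.mul st.continuous).integrable_of_hasCompactSupport ct.mul_right
  · simp only [sq]
    exact (sl.mul sl).integrable_of_hasCompactSupport cl.mul_right
  · exact (sf.continuous.mul sl).integrable_of_hasCompactSupport cf.mul_right
  · exact (sf.continuous.mul st.continuous).integrable_of_hasCompactSupport cf.mul_right
  · exact (sl.mul st.continuous).integrable_of_hasCompactSupport cl.mul_right
  · simp only [tder_sq hu, integral_const_mul]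
  · simp only [tder_grad2 hu, integral_const_mul]
    rw [green sf st cf, mul_neg]
    rfl
  · have := green sf sf cf
    have e1 : ∫ x, grad2 u x t = ∫ x, ∑ i, spd i (fun y => u y t) x * spd i (fun y => u y t) x := by
      simp only [grad2, sq]
    rw [e1, this, neg_neg]
    refine integral_congr_ae (Filter.Eventually.of_forall fun x => ?_)
    exact mul_comm _ _
  · exact hess_lap sf cf

set_option maxHeartbeats 1000000 in
lemma slice_est {d : ℕ} {T : ℝ} {K K' : Set (Fin d → ℝ)} {u v : (Fin d → ℝ) → ℝ → ℝ}
    (hu : Van T K u) (hK : IsCompact K) (su : Sm u)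
    (hv : Van T K' v) (hK' : IsCompact K') (sv : Sm v)
    {t : ℝ} (ht : t ∈ Set.Ioo (0 : ℝ) T)
    (ρ C0 κ M lam a aM : ℝ)
    (hC0 : 0 < C0) (hκ : κ = 2 * ρ ^ 2 + 1) (hM : M = 8 * C0 ^ 2 + 6 * κ * C0 ^ 2)
    (hlam : lam = 8 * M + 8) (ha : lam ≤ a) (haM : a ≤ aM)
    (h1 : ∀ x, |tder u x t + lap u x t| ≤ C0 * (|u x t| + gradNorm u x t + |v x t|))
    (h2 : ∀ x, |tder v x t - lap v x t - ρ * lap u x t| ≤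
          C0 * (|u x t| + |v x t| + gradNorm u x t + gradNorm v x t)) (C1 Q : ℝ)
    (hC1 : C1 = 4 + 6 * C0 ^ 2 + 4 * ρ ^ 2 + 16 * C0 ^ 2 + 3 * (4 + 2 * aM ^ 2))
    (hQ : Q = κ * (2 * a * ((∫ x, grad2 u x t) + a * ∫ x, u x t ^ 2) + (∫ x, tder (grad2 u) x t)
        + lam * a * (∫ x, u x t ^ 2) + a * ∫ x, tder (fun x t => u x t ^ 2) x t)
      + (2 * a * (a * (∫ x, v x t ^ 2) - ∫ x, grad2 v x t) + lam * a * (∫ x, v x t ^ 2)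
        + a * (∫ x, tder (fun x t => v x t ^ 2) x t) - ∫ x, tder (grad2 v) x t)) :
    (∫ x, ((u x t) ^ 2 + grad2 u x t + hess2 u x t + (tder u x t) ^ 2) ≤ C1 * Q) ∧
    (∫ x, ((v x t) ^ 2 + grad2 v x t + hess2 v x t + (tder v x t) ^ 2) ≤ C1 * Q) := by
  obtain ⟨u1, u2, u3, u4, u5, u6, u7, u8, u9, u10, u11, u12⟩ := slice_facts hu hK su ht
  obtain ⟨v1, v2, v3, v4, v5, v6, v7, v8, v9, v10, v11, v12⟩ := slice_facts hv hK' sv ht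
  obtain ⟨iu, eu⟩ := integral_lin5 u1 u2 u8 u7 u6 (κ * (2 * a ^ 2 + lam * a)) (4 * a * κ)
    (-2 * κ) (2 * a * κ) (2 * a * κ)
  obtain ⟨iv, ev⟩ := integral_lin5 v1 v2 v8 v7 v6 (2 * a ^ 2 + lam * a) (lam / 8) 2 (2 * a)
    (2 * a + lam / 8)
  have iR := (iu.fun_add iv).const_mul C1
  have eR := (integral_const_mul (μ := (volume : Measure (Fin d → ℝ))) C1 _).trans
    (congrArg (fun y => C1 * y) (integral_add iu iv))
  rw [eu, ev, u11, v11] at eR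
  rw [u9, u10, v9, v10] at hQ
  have hpt := fun x => carleman_pointwise ρ C0 κ M lam a aM (u x t) (v x t) (gradNorm u x t)
    (gradNorm v x t) (lap u x t) (lap v x t) (tder u x t) (tder v x t) hC0 hκ hM hlam ha haM
    (Real.sqrt_nonneg _) (Real.sqrt_nonneg _) (h1 x) (h2 x)
  simp only [gradNorm_sq, ← hC1] at hpt
  constructor
  · have e1 : ∫ x, ((u x t) ^ 2 + grad2 u x t + hess2 u x t + (tder u x t) ^ 2)
      = ∫ x, ((u x t) ^ 2 + grad2 u x t + lap u x t ^ 2 + (tder u x t) ^ 2) := by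
      rw [integral_add ((u1.fun_add u2).fun_add u3) u4, integral_add (u1.fun_add u2) u3,
        integral_add ((u1.fun_add u2).fun_add u5) u4, integral_add (u1.fun_add u2) u5, u12]
    rw [e1]
    refine (integral_mono (((u1.fun_add u2).fun_add u5).fun_add u4) iR fun x => ?_).trans ?_
    · refine ((hpt x).1).trans (le_of_eq ?_)
      ring
    · refine (eR.trans ?_).le
      rw [hQ]; ring
  · have e1 : ∫ x, ((v x t) ^ 2 + grad2 v x t + hess2 v x t + (tder v x t) ^ 2)
      = ∫ x, ((v x t) ^ 2 + grad2 v x t + lap v x t ^ 2 + (tder v x t) ^ 2) := by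
      rw [integral_add ((v1.fun_add v2).fun_add v3) v4, integral_add (v1.fun_add v2) v3,
        integral_add ((v1.fun_add v2).fun_add v5) v4, integral_add (v1.fun_add v2) v5, v12]
    rw [e1]
    refine (integral_mono (((v1.fun_add v2).fun_add v5).fun_add v4) iR fun x => ?_).trans ?_
    · refine ((hpt x).2).trans (le_of_eq ?_)
      ring
    · refine (eR.trans ?_).le
      rw [hQ]; ring

/-- Integrating a differential inequality; no integrability of `n` is needed. -/
lemma int_le_of_deriv {T : ℝ} (hT : 0 < T) {H H' n : ℝ → ℝ}
    (hc : ContinuousOn H (Set.Icc 0 T)) (hd : ∀ t ∈ Set.Ioo (0 : ℝ) T, HasDerivAt H (H' t) t)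
    (h0 : ∀ t ∈ Set.Ioo (0 : ℝ) T, 0 ≤ n t) (hn : ∀ t ∈ Set.Ioo (0 : ℝ) T, n t ≤ H' t) :
    ∫ t in Set.Ioo (0 : ℝ) T, n t ≤ H T - H 0 := by
  by_cases hi : IntegrableOn n (Set.Ioo (0 : ℝ) T)
  · have := intervalIntegral.integral_le_sub_of_hasDeriv_right_of_le hT.le hc
      (fun x hx => (hd x hx).hasDerivWithinAt) ((integrableOn_Icc_iff_integrableOn_Ioo).2 hi) hn
    rwa [intervalIntegral.integral_of_le hT.le, integral_Ioc_eq_integral_Ioo] at this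
  · rw [integral_undef hi]
    have hm : MonotoneOn H (Set.Icc 0 T) := by
      refine monotoneOn_of_hasDerivWithinAt_nonneg (f' := H') (convex_Icc 0 T) hc ?_ ?_
      · intro x hx
        rw [interior_Icc] at hx
        exact (hd x hx).hasDerivWithinAt
      · intro x hx
        rw [interior_Icc] at hx
        exact (h0 x hx).trans (hn x hx)
    have := hm (Set.left_mem_Icc.2 hT.le) (Set.right_mem_Icc.2 hT.le) hT.le
    linarith

lemma sqrt_final {I C2 X Y Z : ℝ} (hC2 : 0 ≤ C2) (hX : 0 ≤ X) (hY : 0 ≤ Y) (hZ : 0 ≤ Z)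
    (h : I ≤ C2 * (X + Y + Z)) :
    Real.sqrt I ≤ Real.sqrt C2 * (Real.sqrt X + Real.sqrt Y + Real.sqrt Z) := by
  rw [Real.sqrt_le_left (by positivity), mul_pow, Real.sq_sqrt hC2]
  refine h.trans ?_
  gcongr
  have hx := Real.sq_sqrt hX
  have hy := Real.sq_sqrt hY
  have hz := Real.sq_sqrt hZ
  have h1 : 0 ≤ √X * √Y := by positivity
  have h2 : 0 ≤ √X * √Z := by positivity
  have h3 : 0 ≤ √Y * √Z := by positivity
  nlinarith

/-- Global Lipschitz stability for the backward problem of the linearized mean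
field game system, by the data `u(·,T)` in `H¹`, `∇v(·,0)` in `L²` and `v(·,T)`
in `L²`. -/
theorem global_lipschitz_stability_mfg
    (d : ℕ) (hd : 1 ≤ d) (T : ℝ) (hT : 0 < T) (ρ₀ C₀ : ℝ) (hC₀ : 0 < C₀) :
    ∃ C > (0:ℝ),
      ∀ u v : (Fin d → ℝ) → ℝ → ℝ, Admissible T u → Admissible T v →
      (∀ x : Fin d → ℝ, ∀ t ∈ Set.Ioo (0:ℝ) T,
        |tder u x t + lap u x t| ≤ C₀ * (|u x t| + gradNorm u x t + |v x t|)) →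
      (∀ x : Fin d → ℝ, ∀ t ∈ Set.Ioo (0:ℝ) T,
        |tder v x t - lap v x t - ρ₀ * lap u x t| ≤
          C₀ * (|u x t| + |v x t| + gradNorm u x t + gradNorm v x t)) →
      Real.sqrt (∫ t in Set.Ioo (0:ℝ) T, ∫ x : Fin d → ℝ,
          ((u x t) ^ 2 + grad2 u x t + hess2 u x t + (tder u x t) ^ 2))
      + Real.sqrt (∫ t in Set.Ioo (0:ℝ) T, ∫ x : Fin d → ℝ,
          ((v x t) ^ 2 + grad2 v x t + hess2 v x t + (tder v x t) ^ 2))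
      ≤ C * (Real.sqrt (∫ x : Fin d → ℝ, ((u x T) ^ 2 + grad2 u x T))
          + Real.sqrt (∫ x : Fin d → ℝ, grad2 v x 0)
          + Real.sqrt (∫ x : Fin d → ℝ, (v x T) ^ 2)) := by
  obtain ⟨κ, hκ⟩ : ∃ κ : ℝ, κ = 2 * ρ₀ ^ 2 + 1 := ⟨_, rfl⟩
  obtain ⟨M, hM⟩ : ∃ M : ℝ, M = 8 * C₀ ^ 2 + 6 * κ * C₀ ^ 2 := ⟨_, rfl⟩
  obtain ⟨lam, hlam⟩ : ∃ lam : ℝ, lam = 8 * M + 8 := ⟨_, rfl⟩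
  obtain ⟨a, hadef⟩ : ∃ a : ℝ → ℝ, a = fun t => lam * Real.exp (lam * t) := ⟨_, rfl⟩
  obtain ⟨W, hWdef⟩ : ∃ W : ℝ → ℝ, W = fun t => Real.exp (2 * Real.exp (lam * t)) := ⟨_, rfl⟩
  obtain ⟨C1, hC1⟩ : ∃ C1 : ℝ, C1 = 4 + 6 * C₀ ^ 2 + 4 * ρ₀ ^ 2 + 16 * C₀ ^ 2
    + 3 * (4 + 2 * (a T) ^ 2) := ⟨_, rfl⟩
  have hκ0 : 0 < κ := by rw [hκ]; positivity
  have hM0 : 0 ≤ M := by rw [hM]; positivity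
  have hlam0 : 0 < lam := by rw [hlam]; positivity
  have hC10 : 0 < C1 := by rw [hC1]; positivity
  have ha0 : ∀ t, 0 < a t := fun t => by rw [hadef]; positivity
  have hW0 : ∀ t, 0 < W t := fun t => by rw [hWdef]; positivity
  have hW1 : ∀ t, 1 ≤ W t := fun t => by
    rw [hWdef]; exact Real.one_le_exp (by positivity)
  have hda : ∀ t, HasDerivAt a (lam * a t) t := fun t => by
    rw [hadef]
    have := (((hasDerivAt_id t).const_mul lam).exp).const_mul lam
    convert! this using 1
    simp only [id]; ring
  have hdW : ∀ t, HasDerivAt W (2 * a t * W t) t := fun t => by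
    rw [hadef, hWdef]
    have := ((((hasDerivAt_id t).const_mul lam).exp).const_mul 2).exp
    convert! this using 1
    simp; ring
  have hca : Continuous a := continuous_iff_continuousAt.2 fun t => (hda t).continuousAt
  have hcW : Continuous W := continuous_iff_continuousAt.2 fun t => (hdW t).continuousAt
  have hale : ∀ t ∈ Set.Ioo (0 : ℝ) T, lam ≤ a t ∧ a t ≤ a T := by
    intro t ht
    rw [hadef]
    constructor
    · have : 1 ≤ Real.exp (lam * t) := Real.one_le_exp (mul_nonneg hlam0.le ht.1.le)
      exact le_mul_of_one_le_right hlam0.le this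
    · have := ht.2.le
      simp only
      gcongr
  obtain ⟨C2, hC2⟩ : ∃ C2 : ℝ, C2 = C1 * (W T * κ * (1 + a T) + W 0 + W T * a T) := ⟨_, rfl⟩
  have hC20 : 0 < C2 := by
    rw [hC2]
    have := ha0 T
    have := hW0 T
    have := hW0 0
    positivity
  refine ⟨2 * Real.sqrt C2, by positivity, ?_⟩
  rintro u v ⟨su, K, hK, hu⟩ ⟨sv, K', hK', hv⟩ h1 h2
  change Sm u at su
  change Sm v at sv
  change Van T K u at hu
  change Van T K' v at hv
  have i0 : (0 : ℝ) ∈ Set.Icc (0 : ℝ) T := Set.left_mem_Icc.2 hT.le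
  have iT : T ∈ Set.Icc (0 : ℝ) T := Set.right_mem_Icc.2 hT.le
  obtain ⟨Au, hAu⟩ : ∃ A : ℝ → ℝ, A = fun t => ∫ x, u x t ^ 2 := ⟨_, rfl⟩
  obtain ⟨Bu, hBu⟩ : ∃ A : ℝ → ℝ, A = fun t => ∫ x, grad2 u x t := ⟨_, rfl⟩
  obtain ⟨Av, hAv⟩ : ∃ A : ℝ → ℝ, A = fun t => ∫ x, v x t ^ 2 := ⟨_, rfl⟩
  obtain ⟨Bv, hBv⟩ : ∃ A : ℝ → ℝ, A = fun t => ∫ x, grad2 v x t := ⟨_, rfl⟩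
  have nAu : ∀ t, 0 ≤ Au t := fun t => by
    rw [hAu]; exact integral_nonneg fun x => sq_nonneg _
  have nAv : ∀ t, 0 ≤ Av t := fun t => by
    rw [hAv]; exact integral_nonneg fun x => sq_nonneg _
  have nBu : ∀ t, 0 ≤ Bu t := fun t => by
    rw [hBu]; exact integral_nonneg fun x => grad2_nonneg u x t
  have nBv : ∀ t, 0 ≤ Bv t := fun t => by
    rw [hBv]; exact integral_nonneg fun x => grad2_nonneg v x t
  have cAu : ContinuousOn Au (Set.Icc 0 T) := by rw [hAu]; exact hu.sq.contOn hK su.sq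
  have cBu : ContinuousOn Bu (Set.Icc 0 T) := by
    rw [hBu]; exact (hu.grad2 hK).contOn hK su.grad2
  have cAv : ContinuousOn Av (Set.Icc 0 T) := by rw [hAv]; exact hv.sq.contOn hK' sv.sq
  have cBv : ContinuousOn Bv (Set.Icc 0 T) := by
    rw [hBv]; exact (hv.grad2 hK').contOn hK' sv.grad2
  obtain ⟨Q, hQ⟩ : ∃ Q : ℝ → ℝ, Q = fun t =>
      κ * (2 * a t * ((∫ x, grad2 u x t) + a t * ∫ x, u x t ^ 2)
        + (∫ x, tder (grad2 u) x t)
        + lam * a t * (∫ x, u x t ^ 2) + a t * ∫ x, tder (fun x t => u x t ^ 2) x t)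
      + (2 * a t * (a t * (∫ x, v x t ^ 2) - ∫ x, grad2 v x t) + lam * a t * (∫ x, v x t ^ 2)
        + a t * (∫ x, tder (fun x t => v x t ^ 2) x t) - ∫ x, tder (grad2 v) x t) := ⟨_, rfl⟩
  have hest := fun t (ht : t ∈ Set.Ioo (0 : ℝ) T) =>
    slice_est hu hK su hv hK' sv ht ρ₀ C₀ κ M lam (a t) (a T) hC₀ hκ hM hlam
      (hale t ht).1 (hale t ht).2 (fun x => h1 x t ht) (fun x => h2 x t ht) C1 (Q t) hC1
      (by rw [hQ])
  obtain ⟨H, hH⟩ : ∃ H : ℝ → ℝ, H = fun t =>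
    C1 * (W t * (κ * (Bu t + a t * Au t) + (a t * Av t - Bv t))) := ⟨_, rfl⟩
  have cH : ContinuousOn H (Set.Icc 0 T) := by
    rw [hH]
    have := hca.continuousOn (s := Set.Icc 0 T)
    have := hcW.continuousOn (s := Set.Icc 0 T)
    fun_prop
  have dH : ∀ t ∈ Set.Ioo (0 : ℝ) T, HasDerivAt H (C1 * (W t * Q t)) t := by
    intro t ht
    have dAu := hu.sq.deriv_int hK su.sq ht
    have dBu := (hu.grad2 hK).deriv_int hK su.grad2 ht
    have dAv := hv.sq.deriv_int hK' sv.sq ht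
    have dBv := (hv.grad2 hK').deriv_int hK' sv.grad2 ht
    rw [hH, hQ, hAu, hBu, hAv, hBv]
    have := ((hdW t).mul (((dBu.add ((hda t).mul dAu)).const_mul κ).add
      (((hda t).mul dAv).sub dBv))).const_mul C1
    convert! this using 1
    simp only [Pi.add_apply, Pi.mul_apply, Pi.sub_apply]
    ring
  have hmul : ∀ t, ∀ n : ℝ, 0 ≤ n → n ≤ C1 * Q t → n ≤ C1 * (W t * Q t) := by
    intro t n hn h
    have h3 : 1 * (C1 * Q t) ≤ W t * (C1 * Q t) :=
      mul_le_mul_of_nonneg_right (hW1 t) (hn.trans h)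
    linarith
  have pu : ∀ t, 0 ≤ ∫ x : Fin d → ℝ,
      ((u x t) ^ 2 + grad2 u x t + hess2 u x t + (tder u x t) ^ 2) := fun t =>
    integral_nonneg fun x => by
      have := grad2_nonneg u x t
      have := hess2_nonneg u x t
      positivity
  have pv : ∀ t, 0 ≤ ∫ x : Fin d → ℝ,
      ((v x t) ^ 2 + grad2 v x t + hess2 v x t + (tder v x t) ^ 2) := fun t =>
    integral_nonneg fun x => by
      have := grad2_nonneg v x t
      have := hess2_nonneg v x t
      positivity
  have eX : ∫ x : Fin d → ℝ, ((u x T) ^ 2 + grad2 u x T) = Au T + Bu T := by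
    rw [hAu, hBu]
    exact integral_add
      ((su.sq.slice T).continuous.integrable_of_hasCompactSupport (hu.sq.cpt hK iT))
      ((su.grad2.slice T).continuous.integrable_of_hasCompactSupport ((hu.grad2 hK).cpt hK iT))
  have eY : ∫ x : Fin d → ℝ, grad2 v x 0 = Bv 0 := by rw [hBv]
  have eZ : ∫ x : Fin d → ℝ, (v x T) ^ 2 = Av T := by rw [hAv]
  have hHT : H T - H 0 ≤ C2 * ((Au T + Bu T) + Bv 0 + Av T) := by
    rw [hH, hC2, mul_assoc C1, ← mul_sub]
    refine mul_le_mul_of_nonneg_left ?_ hC10.le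
    have := nAu T
    have := nBu T
    have := nAv T
    have := nBv T
    have := nAu 0
    have := nBu 0
    have := nAv 0
    have := nBv 0
    have := ha0 T
    have := ha0 0
    have := hW0 T
    have := hW0 0
    have q1 : 0 ≤ W T * κ * Au T := by positivity
    have q2 : 0 ≤ W T * κ * a T * Bu T := by positivity
    have q3 : 0 ≤ W T * κ * (1 + a T) * (Bv 0 + Av T) := by positivity
    have q4 : 0 ≤ W 0 * (Au T + Bu T + Av T) := by positivity
    have q5 : 0 ≤ W T * a T * (Au T + Bu T + Bv 0) := by positivity
    have q6 : 0 ≤ W 0 * κ * (Bu 0 + a 0 * Au 0) := by positivity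
    have q7 : 0 ≤ W 0 * a 0 * Av 0 := by positivity
    have q8 : 0 ≤ W T * Bv T := by positivity
    have key : (W T * κ * (1 + a T) + W 0 + W T * a T) * (Au T + Bu T + Bv 0 + Av T)
      - (W T * (κ * (Bu T + a T * Au T) + (a T * Av T - Bv T))
        - W 0 * (κ * (Bu 0 + a 0 * Au 0) + (a 0 * Av 0 - Bv 0)))
      = W T * κ * Au T + W T * κ * a T * Bu T + W T * κ * (1 + a T) * (Bv 0 + Av T)
        + W 0 * (Au T + Bu T + Av T) + W T * a T * (Au T + Bu T + Bv 0)
        + W 0 * κ * (Bu 0 + a 0 * Au 0) + W 0 * a 0 * Av 0 + W T * Bv T := by ring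
    linarith
  have fu := (int_le_of_deriv hT cH dH (fun t _ => pu t)
    (fun t ht => hmul t _ (pu t) (hest t ht).1)).trans hHT
  have fv := (int_le_of_deriv hT cH dH (fun t _ => pv t)
    (fun t ht => hmul t _ (pv t) (hest t ht).2)).trans hHT
  have nX : 0 ≤ Au T + Bu T := add_nonneg (nAu T) (nBu T)
  have ru := sqrt_final hC20.le nX (nBv 0) (nAv T) fu
  have rv := sqrt_final hC20.le nX (nBv 0) (nAv T) fv
  rw [eX, eY, eZ]
  linarith
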